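/- arXiv:2501.17016 — 2 statements merged into one kernel-verified Lean document; each statement's English description precedes it below -/
import Mathlib

section
/- Under Assumption (A): (1) Γ ⊆ Γ_∞; (2) Γ_∞ is an open convex cone, invariant under permutations of the coordinates, and contains Γₙ; (3) either f_∞ ≡ +∞ on Γ_∞, or f_∞ is finite at every point of Γ_∞ and is a concave function on Γ_∞. -/
open Filter

/-- Assumption (A) from the paper: `Γ ⊆ ℝⁿ` is an open convex symmetric cone with
`Γₙ ⊆ Γ ⊆ Γ₁`, and `f : Γ → (0,∞)` is smooth, symmetric, concave, with positive partial
derivatives, vanishing at the boundary of `Γ`, and `f(Rλ) → +∞` as `R → +∞`. -/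
structure AssumptionA (n : ℕ) (Γ : Set (Fin n → ℝ)) (f : (Fin n → ℝ) → ℝ) : Prop where
  isOpen : IsOpen Γ
  convex : Convex ℝ Γ
  cone : ∀ x ∈ Γ, ∀ t : ℝ, 0 < t → t • x ∈ Γ
  perm_invariant : ∀ x ∈ Γ, ∀ σ : Equiv.Perm (Fin n), (fun i => x (σ i)) ∈ Γ
  orthant_subset : {x : Fin n → ℝ | ∀ i, 0 < x i} ⊆ Γ
  subset_halfspace : Γ ⊆ {x : Fin n → ℝ | 0 < ∑ i, x i}
  f_pos : ∀ x ∈ Γ, 0 < f x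
  f_smooth : ContDiffOn ℝ (⊤ : ℕ∞) f Γ
  f_perm_invariant : ∀ x ∈ Γ, ∀ σ : Equiv.Perm (Fin n), f (fun i => x (σ i)) = f x
  f_concave : ConcaveOn ℝ Γ f
  f_deriv_pos : ∀ x ∈ Γ, ∀ i : Fin n, 0 < fderiv ℝ f x (Pi.single i 1)
  f_boundary_zero : ∀ x₀ ∈ frontier Γ, Tendsto f (nhdsWithin x₀ Γ) (nhds 0)
  f_proper : ∀ x ∈ Γ, Tendsto (fun R : ℝ => f (R • x)) atTop atTop

/-- `Γ_∞`: the set of `λ ∈ ℝⁿ` such that for every `i`, replacing the `i`-th coordinate by any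
sufficiently large `R` lands in `Γ`. -/
def GammaInfty (n : ℕ) (Γ : Set (Fin n → ℝ)) : Set (Fin n → ℝ) :=
  {x | ∀ i : Fin n, ∃ R₀ : ℝ, ∀ R ≥ R₀, Function.update x i R ∈ Γ}

/-- `f_{∞,i}(λ) = lim_{R→+∞} f(λ₁,…,λ_{i−1},R,λ_{i+1},…,λₙ)`, realized as a limsup in `EReal`
(the limit exists in `(0,+∞]` since `f` is increasing in `λᵢ`). -/
noncomputable def fInftyi (n : ℕ) (f : (Fin n → ℝ) → ℝ) (i : Fin n) (x : Fin n → ℝ) : EReal :=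
  Filter.limsup (fun R : ℝ => ((f (Function.update x i R) : ℝ) : EReal)) Filter.atTop

/-- `f_∞(λ) = min_{1 ≤ i ≤ n} f_{∞,i}(λ)`, with values in `(0,+∞]`. -/
noncomputable def fInfty (n : ℕ) (f : (Fin n → ℝ) → ℝ) (x : Fin n → ℝ) : EReal :=
  ⨅ i : Fin n, fInftyi n f i x

/-!
Monotonicity turns the limit `R → +∞` into an existential statement: `c < f_∞(λ)` means that for
every `i` some point of `Γ` on the line through `λ` in direction `eᵢ` has `f`-value above `c`.
So the strict hypograph of `f_∞` is an intersection of projections of the convex strict hypograph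
of `f`. An extended-real function with convex strict hypograph over an open set that takes the
value `+∞` at `x` takes it at every `y`: extend the segment from `x` to `y` slightly beyond `y`
and write `y` as a convex combination of `x` and the new endpoint.
-/

section Concave

variable {E : Type*} [AddCommGroup E] [Module ℝ E]

theorem add_mem_of_convex_of_smul_mem {C : Set E} (hC : Convex ℝ C)
    (hsmul : ∀ x ∈ C, ∀ t : ℝ, 0 < t → t • x ∈ C) {x y : E} (hx : x ∈ C) (hy : y ∈ C) :
    x + y ∈ C := by
  have hmid : (2⁻¹ : ℝ) • x + (2⁻¹ : ℝ) • y ∈ C :=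
    hC hx hy (by norm_num) (by norm_num) (by norm_num)
  simpa [smul_add, smul_smul] using hsmul _ hmid 2 two_pos

theorem exists_pos_add_smul_mem_of_isOpen [TopologicalSpace E] [ContinuousAdd E]
    [ContinuousSMul ℝ E] {s : Set E} (hs : IsOpen s) {x : E} (hx : x ∈ s) (v : E) :
    ∃ t : ℝ, 0 < t ∧ x + t • v ∈ s := by
  have hline : Continuous fun t : ℝ => x + t • v := by fun_prop
  have hmem : ∀ᶠ t in nhds (0 : ℝ), x + t • v ∈ s :=
    hline.continuousAt.eventually_mem (hs.mem_nhds (by simpa using hx))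
  have hright : ∀ᶠ t in nhdsWithin (0 : ℝ) (Set.Ioi 0), x + t • v ∈ s :=
    hmem.filter_mono nhdsWithin_le_nhds
  exact (eventually_mem_nhdsWithin.and hright).exists

theorem monotoneOn_of_concaveOn_of_bddBelow [PartialOrder E] [IsOrderedAddMonoid E]
    [PosSMulMono ℝ E] {s : Set E} {f : E → ℝ} (hs : IsUpperSet s) (hf : ConcaveOn ℝ s f)
    (hbdd : BddBelow (f '' s)) : MonotoneOn f s := by
  intro x hx y _ hxy
  obtain ⟨m, hm⟩ := hbdd
  by_contra! hlt
  have hgap : 0 < f x - f y := sub_pos.2 hlt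
  have hmx : m ≤ f x := hm ⟨x, hx, rfl⟩
  -- For `t` this large, the chord from `x` to `x + t • (y - x)` would force `f y ≥ f x`.
  set t : ℝ := (f x - m) / (f x - f y) + 1 with ht
  have ht1 : 1 ≤ t := le_add_of_nonneg_left (div_nonneg (sub_nonneg.2 hmx) hgap.le)
  have ht0 : 0 < t := one_pos.trans_le ht1
  have hz : x + t • (y - x) ∈ s :=
    hs (le_add_of_nonneg_right (smul_nonneg ht0.le (sub_nonneg.2 hxy))) hx
  have hy_eq : (1 - t⁻¹) • x + t⁻¹ • (x + t • (y - x)) = y := by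
    rw [smul_add, inv_smul_smul₀ ht0.ne', sub_smul, one_smul]
    abel
  have hchord : (1 - t⁻¹) * f x + t⁻¹ * f (x + t • (y - x)) ≤ f y := by
    simpa only [hy_eq, smul_eq_mul] using
      hf.2 hx hz (sub_nonneg.2 (inv_le_one_of_one_le₀ ht1)) (inv_nonneg.2 ht0.le)
        (sub_add_cancel 1 t⁻¹)
  have hmz : t⁻¹ * m ≤ t⁻¹ * f (x + t • (y - x)) :=
    mul_le_mul_of_nonneg_left (hm ⟨_, hz, rfl⟩) (inv_nonneg.2 ht0.le)
  have hslope : t * (f x - f y) ≤ f x - m := by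
    rw [← le_inv_mul_iff₀ ht0]
    linarith
  have hslope_eq : t * (f x - f y) = f x - m + (f x - f y) := by
    rw [ht, add_mul, div_mul_cancel₀ _ hgap.ne', one_mul]
  linarith

theorem concaveOn_of_convex_strict_hypograph {s : Set E} {f : E → ℝ} (hs : Convex ℝ s)
    (hf : Convex ℝ {p : E × ℝ | p.1 ∈ s ∧ p.2 < f p.1}) : ConcaveOn ℝ s f := by
  refine ⟨hs, fun x hx y hy a b ha hb hab => le_of_forall_sub_le fun ε hε => ?_⟩
  have hmem := hf (x := (x, f x - ε)) ⟨hx, sub_lt_self _ hε⟩ (y := (y, f y - ε))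
    ⟨hy, sub_lt_self _ hε⟩ ha hb hab
  calc a • f x + b • f y - ε = a • (f x - ε) + b • (f y - ε) := by
        simp only [smul_eq_mul]
        linear_combination ε * hab
    _ ≤ f (a • x + b • y) := hmem.2.le

variable [TopologicalSpace E] [ContinuousAdd E] [ContinuousSMul ℝ E] {s : Set E} {φ : E → EReal}

theorem exists_mem_openSegment_of_isOpen (hs : IsOpen s) (x : E) {y : E} (hy : y ∈ s) :
    ∃ z ∈ s, y ∈ openSegment ℝ x z := by
  obtain ⟨t, ht, hz⟩ := exists_pos_add_smul_mem_of_isOpen hs hy (y - x)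
  refine ⟨y + t • (y - x), hz, t / (1 + t), 1 / (1 + t), by positivity, by positivity, ?_, ?_⟩
  · field
  · match_scalars <;> field

theorem eq_top_of_convex_strict_hypograph (hs : IsOpen s)
    (hφ : Convex ℝ {p : E × ℝ | p.1 ∈ s ∧ (p.2 : EReal) < φ p.1}) (hbot : ∀ x ∈ s, ⊥ < φ x)
    {x y : E} (hx : x ∈ s) (hy : y ∈ s) (htop : φ x = ⊤) : φ y = ⊤ := by
  obtain ⟨z, hz, a, b, ha, hb, hab, rfl⟩ := exists_mem_openSegment_of_isOpen hs x hy
  obtain ⟨d, -, hd⟩ := EReal.lt_iff_exists_real_btwn.1 (hbot z hz)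
  rw [EReal.eq_top_iff_forall_lt]
  intro M
  have hlt : ((a * ((M - b * d) / a) + b * d : ℝ) : EReal) < φ (a • x + b • z) :=
    (hφ (x := (x, (M - b * d) / a)) ⟨hx, htop ▸ EReal.coe_lt_top _⟩ (y := (z, d)) ⟨hz, hd⟩
      ha.le hb.le hab).2
  rwa [mul_div_cancel₀ _ ha.ne', sub_add_cancel] at hlt

theorem eq_top_or_exists_concaveOn_of_convex_strict_hypograph (hs : IsOpen s) (hconv : Convex ℝ s)
    (hφ : Convex ℝ {p : E × ℝ | p.1 ∈ s ∧ (p.2 : EReal) < φ p.1}) (hbot : ∀ x ∈ s, ⊥ < φ x) :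
    (∀ x ∈ s, φ x = ⊤) ∨ ∃ g : E → ℝ, ConcaveOn ℝ s g ∧ ∀ x ∈ s, φ x = g x := by
  by_cases! h : ∃ x ∈ s, φ x = ⊤
  · obtain ⟨x, hx, htop⟩ := h
    exact Or.inl fun y hy => eq_top_of_convex_strict_hypograph hs hφ hbot hx hy htop
  · have hreal : ∀ x ∈ s, φ x = (φ x).toReal := fun x hx =>
      (EReal.coe_toReal (h x hx) (hbot x hx).ne').symm
    refine Or.inr ⟨fun x => (φ x).toReal, concaveOn_of_convex_strict_hypograph hconv ?_, hreal⟩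
    convert hφ using 3 with p
    refine and_congr_right fun hp => ?_
    rw [hreal _ hp, EReal.coe_lt_coe_iff, EReal.toReal_coe]

end Concave

theorem isUpperSet_of_isOpen_of_orthant_subset {ι : Type*} {C : Set (ι → ℝ)} (hopen : IsOpen C)
    (hconv : Convex ℝ C) (hsmul : ∀ x ∈ C, ∀ t : ℝ, 0 < t → t • x ∈ C)
    (horthant : {x : ι → ℝ | ∀ i, 0 < x i} ⊆ C) : IsUpperSet C := by
  intro x y hxy hx
  obtain ⟨ε, hε, hmem⟩ := exists_pos_add_smul_mem_of_isOpen hopen hx (-1)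
  have hpos : y - x + ε • 1 ∈ C := horthant fun i => by
    simpa using add_pos_of_nonneg_of_pos (sub_nonneg.2 (hxy i)) hε
  convert add_mem_of_convex_of_smul_mem hconv hsmul hmem hpos using 1
  module

theorem update_smul_add_smul {ι : Type*} [DecidableEq ι] (x y : ι → ℝ) (i : ι) (a b R S : ℝ) :
    Function.update (a • x + b • y) i (a * R + b * S) =
      a • Function.update x i R + b • Function.update y i S := by
  simp only [← smul_eq_mul, Function.update_add, Function.update_smul]

section GammaInfty

variable {n : ℕ} {Γ : Set (Fin n → ℝ)}

theorem mem_gammaInfty_iff (hΓ : IsUpperSet Γ) {x : Fin n → ℝ} :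
    x ∈ GammaInfty n Γ ↔ ∀ i, ∃ R : ℝ, Function.update x i R ∈ Γ :=
  forall_congr' fun _ =>
    ⟨fun ⟨R, hR⟩ => ⟨R, hR R le_rfl⟩,
      fun ⟨R, hR⟩ => ⟨R, fun _ hS => hΓ (update_le_update_iff'.2 hS) hR⟩⟩

theorem subset_gammaInfty (hΓ : IsUpperSet Γ) : Γ ⊆ GammaInfty n Γ := fun x hx =>
  (mem_gammaInfty_iff hΓ).2 fun i => ⟨x i, by rwa [Function.update_eq_self]⟩

theorem isOpen_gammaInfty (hΓ : IsUpperSet Γ) (hopen : IsOpen Γ) : IsOpen (GammaInfty n Γ) := by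
  have hunion : GammaInfty n Γ = ⋂ i, ⋃ R : ℝ, (fun x => Function.update x i R) ⁻¹' Γ := by
    ext x
    simp only [mem_gammaInfty_iff hΓ, Set.mem_iInter, Set.mem_iUnion, Set.mem_preimage]
  rw [hunion]
  exact isOpen_iInter_of_finite fun i => isOpen_iUnion fun R =>
    hopen.preimage (continuous_id.update i continuous_const)

theorem convex_gammaInfty (hΓ : IsUpperSet Γ) (hconv : Convex ℝ Γ) :
    Convex ℝ (GammaInfty n Γ) := by
  intro x hx y hy a b ha hb hab
  rw [mem_gammaInfty_iff hΓ] at hx hy ⊢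
  intro i
  obtain ⟨R, hR⟩ := hx i
  obtain ⟨S, hS⟩ := hy i
  exact ⟨a * R + b * S, update_smul_add_smul x y i a b R S ▸ hconv hR hS ha hb hab⟩

theorem smul_mem_gammaInfty (hΓ : IsUpperSet Γ) {t : ℝ} (ht : ∀ x ∈ Γ, t • x ∈ Γ)
    {x : Fin n → ℝ} (hx : x ∈ GammaInfty n Γ) : t • x ∈ GammaInfty n Γ := by
  rw [mem_gammaInfty_iff hΓ] at hx ⊢
  intro i
  obtain ⟨R, hR⟩ := hx i
  exact ⟨t • R, Function.update_smul t x i R ▸ ht _ hR⟩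

theorem comp_perm_mem_gammaInfty {σ : Equiv.Perm (Fin n)}
    (hσ : ∀ x ∈ Γ, (fun i => x (σ i)) ∈ Γ) {x : Fin n → ℝ} (hx : x ∈ GammaInfty n Γ) :
    (fun i => x (σ i)) ∈ GammaInfty n Γ := by
  intro i
  obtain ⟨R₀, hR₀⟩ := hx (σ i)
  refine ⟨R₀, fun R hR => ?_⟩
  rw [show Function.update (fun j => x (σ j)) i R = fun j => Function.update x (σ i) R (σ j) from
    (Function.update_comp_eq_of_injective x σ.injective i R).symm]
  exact hσ _ (hR₀ R hR)

end GammaInfty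

section fInfty

variable {n : ℕ} {Γ : Set (Fin n → ℝ)} {f : (Fin n → ℝ) → ℝ} {x : Fin n → ℝ}

theorem lt_fInfty_iff {a : EReal} (ha : a < ⊤) :
    a < fInfty n f x ↔ ∀ i, a < fInftyi n f i x := by
  simp only [fInfty, ← Finset.inf_univ_eq_iInf, Finset.lt_inf_iff ha, Finset.mem_univ,
    forall_true_left]

theorem coe_le_fInftyi (hΓ : IsUpperSet Γ) (hf : MonotoneOn f Γ) {i : Fin n} {R : ℝ}
    (hR : Function.update x i R ∈ Γ) :
    (f (Function.update x i R) : EReal) ≤ fInftyi n f i x := by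
  have hle : ∀ᶠ S in atTop, (f (Function.update x i R) : EReal) ≤ f (Function.update x i S) := by
    filter_upwards [eventually_ge_atTop R] with S hRS
    have hupd : Function.update x i R ≤ Function.update x i S :=
      update_le_update_iff'.2 hRS
    exact EReal.coe_le_coe_iff.2 (hf hR (hΓ hupd hR) hupd)
  exact le_limsup_of_frequently_le' hle.frequently

theorem coe_lt_fInftyi_iff (hΓ : IsUpperSet Γ) (hf : MonotoneOn f Γ)
    (hx : x ∈ GammaInfty n Γ) {i : Fin n} {c : ℝ} :
    (c : EReal) < fInftyi n f i x ↔
      ∃ R : ℝ, Function.update x i R ∈ Γ ∧ c < f (Function.update x i R) := by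
  constructor
  · intro hc
    obtain ⟨R₀, hR₀⟩ := hx i
    obtain ⟨R, hcR, hR⟩ :=
      ((frequently_lt_of_lt_limsup (h := hc)).and_eventually (eventually_ge_atTop R₀)).exists
    exact ⟨R, hR₀ R hR, EReal.coe_lt_coe_iff.1 hcR⟩
  · rintro ⟨R, hR, hcR⟩
    exact (EReal.coe_lt_coe_iff.2 hcR).trans_le (coe_le_fInftyi hΓ hf hR)

theorem bot_lt_fInfty (hΓ : IsUpperSet Γ) (hf : MonotoneOn f Γ) (hx : x ∈ GammaInfty n Γ) :
    ⊥ < fInfty n f x := by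
  refine (lt_fInfty_iff bot_lt_top).2 fun i => ?_
  obtain ⟨R, hR⟩ := (mem_gammaInfty_iff hΓ).1 hx i
  exact (EReal.bot_lt_coe _).trans_le (coe_le_fInftyi hΓ hf hR)

theorem convex_strict_hypograph_fInfty (hΓ : IsUpperSet Γ) (hmono : MonotoneOn f Γ)
    (hf : ConcaveOn ℝ Γ f) :
    Convex ℝ {p : (Fin n → ℝ) × ℝ | p.1 ∈ GammaInfty n Γ ∧ (p.2 : EReal) < fInfty n f p.1} := by
  rintro ⟨x, c⟩ ⟨hx, hc⟩ ⟨y, d⟩ ⟨hy, hd⟩ a b ha hb hab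
  have hz := convex_gammaInfty hΓ hf.1 hx hy ha hb hab
  refine ⟨hz, (lt_fInfty_iff (EReal.coe_lt_top _)).2 fun i => ?_⟩
  obtain ⟨R, hR⟩ :=
    (coe_lt_fInftyi_iff hΓ hmono hx).1 ((lt_fInfty_iff (EReal.coe_lt_top _)).1 hc i)
  obtain ⟨S, hS⟩ :=
    (coe_lt_fInftyi_iff hΓ hmono hy).1 ((lt_fInfty_iff (EReal.coe_lt_top _)).1 hd i)
  refine (coe_lt_fInftyi_iff hΓ hmono hz).2 ⟨a * R + b * S, ?_⟩
  rw [update_smul_add_smul]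
  exact hf.convex_strict_hypograph (x := (_, c)) hR (y := (_, d)) hS ha hb hab

end fInfty

theorem AssumptionA.isUpperSet {n : ℕ} {Γ : Set (Fin n → ℝ)} {f : (Fin n → ℝ) → ℝ}
    (hA : AssumptionA n Γ f) : IsUpperSet Γ :=
  isUpperSet_of_isOpen_of_orthant_subset hA.isOpen hA.convex hA.cone hA.orthant_subset

theorem AssumptionA.monotoneOn {n : ℕ} {Γ : Set (Fin n → ℝ)} {f : (Fin n → ℝ) → ℝ}
    (hA : AssumptionA n Γ f) : MonotoneOn f Γ :=
  monotoneOn_of_concaveOn_of_bddBelow hA.isUpperSet hA.f_concave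
    ⟨0, Set.forall_mem_image.2 fun x hx => (hA.f_pos x hx).le⟩

theorem stmt_3_general {n : ℕ} {Γ : Set (Fin n → ℝ)} {f : (Fin n → ℝ) → ℝ} (hopen : IsOpen Γ)
    (hcone : ∀ x ∈ Γ, ∀ t : ℝ, 0 < t → t • x ∈ Γ)
    (hperm : ∀ x ∈ Γ, ∀ σ : Equiv.Perm (Fin n), (fun i => x (σ i)) ∈ Γ)
    (horthant : {x : Fin n → ℝ | ∀ i, 0 < x i} ⊆ Γ)
    (hconc : ConcaveOn ℝ Γ f) (hmono : MonotoneOn f Γ) :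
    Γ ⊆ GammaInfty n Γ ∧
    IsOpen (GammaInfty n Γ) ∧
    Convex ℝ (GammaInfty n Γ) ∧
    (∀ x ∈ GammaInfty n Γ, ∀ t : ℝ, 0 < t → t • x ∈ GammaInfty n Γ) ∧
    (∀ x ∈ GammaInfty n Γ, ∀ σ : Equiv.Perm (Fin n), (fun i => x (σ i)) ∈ GammaInfty n Γ) ∧
    {x : Fin n → ℝ | ∀ i, 0 < x i} ⊆ GammaInfty n Γ ∧
    ((∀ x ∈ GammaInfty n Γ, fInfty n f x = ⊤) ∨
      (∃ g : (Fin n → ℝ) → ℝ, ConcaveOn ℝ (GammaInfty n Γ) g ∧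
        ∀ x ∈ GammaInfty n Γ, fInfty n f x = ((g x : ℝ) : EReal))) := by
  have hΓ := isUpperSet_of_isOpen_of_orthant_subset hopen hconc.1 hcone horthant
  have hsub := subset_gammaInfty hΓ
  have hopen' := isOpen_gammaInfty hΓ hopen
  have hconv := convex_gammaInfty hΓ hconc.1
  refine ⟨hsub, hopen', hconv, ?_, ?_, horthant.trans hsub, ?_⟩
  · exact fun x hx t ht => smul_mem_gammaInfty hΓ (fun y hy => hcone y hy t ht) hx
  · exact fun x hx σ => comp_perm_mem_gammaInfty (fun y hy => hperm y hy σ) hx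
  · exact eq_top_or_exists_concaveOn_of_convex_strict_hypograph hopen' hconv
      (convex_strict_hypograph_fInfty hΓ hmono hconc) fun x hx => bot_lt_fInfty hΓ hmono hx

/-- Lemma 2.5 of the paper, first part: `Γ ⊆ Γ_∞`; `Γ_∞` is an open convex symmetric cone
containing the positive orthant `Γₙ`; and either `f_∞ ≡ +∞` on `Γ_∞`, or `f_∞` is finite at
every point of `Γ_∞` and is a concave function on `Γ_∞`. -/
theorem stmt_3 (n : ℕ) (Γ : Set (Fin n → ℝ)) (f : (Fin n → ℝ) → ℝ)
    (hA : AssumptionA n Γ f) :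
    Γ ⊆ GammaInfty n Γ ∧
    IsOpen (GammaInfty n Γ) ∧
    Convex ℝ (GammaInfty n Γ) ∧
    (∀ x ∈ GammaInfty n Γ, ∀ t : ℝ, 0 < t → t • x ∈ GammaInfty n Γ) ∧
    (∀ x ∈ GammaInfty n Γ, ∀ σ : Equiv.Perm (Fin n), (fun i => x (σ i)) ∈ GammaInfty n Γ) ∧
    {x : Fin n → ℝ | ∀ i, 0 < x i} ⊆ GammaInfty n Γ ∧
    ((∀ x ∈ GammaInfty n Γ, fInfty n f x = ⊤) ∨
      (∃ g : (Fin n → ℝ) → ℝ, ConcaveOn ℝ (GammaInfty n Γ) g ∧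
        ∀ x ∈ GammaInfty n Γ, fInfty n f x = ((g x : ℝ) : EReal))) := by
  exact stmt_3_general hA.isOpen hA.cone hA.perm_invariant hA.orthant_subset hA.f_concave
    hA.monotoneOn
end

section
/- Under Assumption (A): (1) either Γ_∞ = ℝⁿ, or Γ_∞ ⊆ Γ₁ = {λ ∈ ℝⁿ : Σᵢ λᵢ > 0}; (2) if Γ_∞ = ℝⁿ, then f_∞ ≡ +∞ on Γ_∞. -/
open Filter

/-!
Write `C` for `Γ`. Everything reduces to whether `C` contains a vector `V` all of whose coordinates
but one are negative. Given such a `V`, any `y` becomes a point of `t • V` plus the positive orthant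
once `t` is large and then the exceptional coordinate of `y` is made large; hence `Γ_∞ = ℝⁿ`.
Conversely, if `Γ_∞ = ℝⁿ`, such a `V` is obtained by enlarging a coordinate of `(-1, …, -1)`, and
since properness makes `f` increase in the directions of `C`, `f` is eventually at least `f (t • V)`
along every coordinate ray, which tends to `+∞` with `t`.

If `x ∈ Γ_∞` has nonpositive coordinate sum, then omitting some coordinate `i` leaves a nonpositive
sum; enlarging `x i` puts the vector in `C`, and summing its images under the powers of a cyclic
permutation of the other coordinates makes these equal and nonpositive. Openness of `C` then makes
them negative.
-/

section ConvexCone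

variable {E : Type*} [AddCommGroup E] [Module ℝ E] {C : ConvexCone ℝ E} {f : E → ℝ} {a b : E}

theorem tendsto_add_smul_atTop (hf : ConcaveOn ℝ C f) (ha : a ∈ C) (hb : b ∈ C)
    (hproper : Tendsto (fun s : ℝ => f (s • b)) atTop atTop) :
    Tendsto (fun s : ℝ => f (a + s • b)) atTop atTop := by
  have hlower : Tendsto (fun s : ℝ => (1 / 2) * f ((2 : ℝ) • a) + (1 / 2) * f ((2 * s) • b))
      atTop atTop :=
    tendsto_atTop_add_const_left _ _ <| Tendsto.const_mul_atTop (by norm_num) <|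
      hproper.comp (tendsto_id.const_mul_atTop two_pos)
  refine tendsto_atTop_mono' _ ?_ hlower
  filter_upwards [eventually_gt_atTop 0] with s hs
  have hmid := hf.2 (C.smul_mem two_pos ha) (C.smul_mem (mul_pos two_pos hs) hb)
    (show (0 : ℝ) ≤ 1 / 2 by norm_num) (show (0 : ℝ) ≤ 1 / 2 by norm_num) (by norm_num)
  have hsum : (1 / 2 : ℝ) • (2 : ℝ) • a + (1 / 2 : ℝ) • (2 * s) • b = a + s • b := by
    module
  rwa [hsum] at hmid

theorem le_apply_add_of_tendsto_atTop (hf : ConcaveOn ℝ C f) (ha : a ∈ C) (hb : b ∈ C)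
    (hproper : Tendsto (fun s : ℝ => f (s • b)) atTop atTop) : f a ≤ f (a + b) := by
  obtain ⟨s, hle, hs⟩ := (((tendsto_add_smul_atTop hf ha hb hproper).eventually_ge_atTop
    (f a)).and (eventually_ge_atTop 1)).exists
  have hs₀ : 0 < s := one_pos.trans_le hs
  have hsegment : a + b ∈ segment ℝ a (a + s • b) := by
    refine ⟨1 - s⁻¹, s⁻¹, sub_nonneg.2 (inv_le_one_of_one_le₀ hs), (inv_pos.2 hs₀).le,
      sub_add_cancel _ _, ?_⟩
    rw [smul_add, inv_smul_smul₀ hs₀.ne']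
    module
  calc f a = min (f a) (f (a + s • b)) := (min_eq_left hle).symm
    _ ≤ f (a + b) :=
      hf.min_le_of_mem_segment ha (C.add_mem ha (C.smul_mem hs₀ hb)) hsegment

end ConvexCone

theorem exists_sum_erase_nonpos {ι M : Type*} [DecidableEq ι] [AddCommGroup M] [LinearOrder M]
    [IsOrderedAddMonoid M] {s : Finset ι} (hs : s.Nonempty) {x : ι → M} (hx : ∑ i ∈ s, x i ≤ 0) :
    ∃ i ∈ s, ∑ j ∈ s.erase i, x j ≤ 0 := by
  by_contra! hpos
  have hneg : ∀ i ∈ s, x i < 0 := fun i hi => by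
    rw [← Finset.add_sum_erase s x hi] at hx
    exact (lt_add_of_pos_right (x i) (hpos i hi)).trans_le hx
  obtain ⟨i, hi⟩ := hs
  exact (hpos i hi).not_ge <| Finset.sum_nonpos fun j hj => (hneg j (Finset.mem_of_mem_erase hj)).le

theorem sum_pow_apply_of_isCycleOn {ι M : Type*} [AddCommMonoid M] {s : Finset ι}
    {σ : Equiv.Perm ι} (hσ : σ.IsCycleOn s) {j : ι} (hj : j ∈ s) (w : ι → M) :
    ∑ k ∈ Finset.range s.card, w ((σ ^ k) j) = ∑ i ∈ s, w i := by
  classical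
  simpa [hj, Pi.single_apply, ite_smul] using
    (Finset.sum_smul_sum_eq_sum_perm hσ (Pi.single j (1 : ℕ)) w).symm

theorem exists_pos_sub_smul_mem {E : Type*} [AddCommGroup E] [TopologicalSpace E]
    [IsTopologicalAddGroup E] [Module ℝ E] [ContinuousSMul ℝ E] {s : Set E} (hs : IsOpen s) {x : E}
    (hx : x ∈ s) (v : E) : ∃ ε : ℝ, 0 < ε ∧ x - ε • v ∈ s := by
  have hlim : Tendsto (fun ε : ℝ => x - ε • v) (nhds 0) (nhds x) :=
    (by fun_prop : Continuous fun ε : ℝ => x - ε • v).tendsto' _ _ (by simp)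
  have hmem : ∀ᶠ ε in nhdsWithin (0 : ℝ) (Set.Ioi 0), x - ε • v ∈ s :=
    (hlim.mono_left nhdsWithin_le_nhds).eventually (hs.mem_nhds hx)
  exact (eventually_mem_nhdsWithin.and hmem).exists

section Coordinates

variable {ι : Type*} {C : ConvexCone ℝ (ι → ℝ)} {V : ι → ℝ} {i : ι}

theorem exists_mem_forall_apply_eq_sum (hsymm : ∀ x ∈ C, ∀ σ : Equiv.Perm ι, x ∘ σ ∈ C)
    {w : ι → ℝ} (hw : w ∈ C) (s : Finset ι) : ∃ V ∈ C, ∀ j ∈ s, V j = ∑ k ∈ s, w k := by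
  classical
  rcases s.eq_empty_or_nonempty with rfl | hs
  · exact ⟨w, hw, by simp⟩
  obtain ⟨σ, hσ, -⟩ := s.countable_toSet.exists_cycleOn
  refine ⟨∑ k ∈ Finset.range s.card, w ∘ (σ ^ k : Equiv.Perm ι), ?_, fun j hj => ?_⟩
  · exact Finset.sum_induction_nonempty _ (· ∈ C) (fun _ _ hx hy => C.add_mem hx hy)
      (Finset.nonempty_range_iff.2 hs.card_ne_zero) fun k _ => hsymm w hw _
  · simpa using sum_pow_apply_of_isCycleOn hσ hj w

theorem exists_mem_forall_ne_neg_of_sum_erase_nonpos [Fintype ι] [DecidableEq ι]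
    (hopen : IsOpen (C : Set (ι → ℝ))) (hsymm : ∀ x ∈ C, ∀ σ : Equiv.Perm ι, x ∘ σ ∈ C)
    {w : ι → ℝ} (hw : w ∈ C) (hsum : ∑ j ∈ Finset.univ.erase i, w j ≤ 0) :
    ∃ V ∈ C, ∀ j ≠ i, V j < 0 := by
  obtain ⟨V, hV, hV_eq⟩ := exists_mem_forall_apply_eq_sum hsymm hw (Finset.univ.erase i)
  obtain ⟨ε, hε, hVε⟩ := exists_pos_sub_smul_mem hopen hV 1
  refine ⟨V - ε • 1, hVε, fun j hj => ?_⟩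
  have hVj : V j ≤ 0 := (hV_eq j (by simp [hj])).trans_le hsum
  simpa using hVj.trans_lt hε

theorem exists_mem_forall_ne_neg_of_perm_invariant {Γ : Set (ι → ℝ)}
    (hsymm : ∀ x ∈ Γ, ∀ σ : Equiv.Perm ι, x ∘ σ ∈ Γ) (hV : V ∈ Γ) (hneg : ∀ j ≠ i, V j < 0)
    (k : ι) : ∃ W ∈ Γ, ∀ j ≠ k, W j < 0 := by
  classical
  refine ⟨V ∘ Equiv.swap i k, hsymm V hV _, fun j hj => hneg _ fun h => hj ?_⟩
  simpa using congrArg (Equiv.swap i k) h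

variable [DecidableEq ι]

theorem eventually_update_sub_smul_pos [Finite ι] (hneg : ∀ j ≠ i, V j < 0) (y : ι → ℝ) :
    ∀ᶠ t : ℝ in atTop, ∀ᶠ R in atTop, ∀ j, 0 < (Function.update y i R - t • V) j := by
  simp only [eventually_all, Pi.sub_apply, Pi.smul_apply, smul_eq_mul, sub_pos]
  intro j
  rcases eq_or_ne j i with rfl | hj
  · simpa only [Function.update_self] using
      .of_forall fun t => eventually_gt_atTop (t * V j)
  · simpa only [Function.update_of_ne hj, eventually_const, id_eq] using
      (tendsto_id.atTop_mul_const_of_neg (hneg j hj)).eventually_lt_atBot (y j)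

theorem eventually_update_mem [Finite ι] (horth : {x : ι → ℝ | ∀ i, 0 < x i} ⊆ C) (hV : V ∈ C)
    (hneg : ∀ j ≠ i, V j < 0) (y : ι → ℝ) : ∀ᶠ R in atTop, Function.update y i R ∈ C := by
  obtain ⟨t, hpos, ht⟩ :=
    ((eventually_update_sub_smul_pos hneg y).and (eventually_gt_atTop 0)).exists
  filter_upwards [hpos] with R hR
  simpa using C.add_mem (C.smul_mem ht hV) (horth hR)

theorem tendsto_update_atTop [Finite ι] {f : (ι → ℝ) → ℝ}
    (horth : {x : ι → ℝ | ∀ i, 0 < x i} ⊆ C) (hf : ConcaveOn ℝ C f)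
    (hproper : ∀ x ∈ C, Tendsto (fun R : ℝ => f (R • x)) atTop atTop) (hV : V ∈ C)
    (hneg : ∀ j ≠ i, V j < 0) (y : ι → ℝ) :
    Tendsto (fun R => f (Function.update y i R)) atTop atTop := by
  refine tendsto_atTop.2 fun c => ?_
  obtain ⟨t, ⟨hpos, ht⟩, hc⟩ := (((eventually_update_sub_smul_pos hneg y).and
    (eventually_gt_atTop 0)).and ((hproper V hV).eventually_ge_atTop c)).exists
  filter_upwards [hpos] with R hR
  calc c ≤ f (t • V) := hc
    _ ≤ f (t • V + (Function.update y i R - t • V)) :=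
      le_apply_add_of_tendsto_atTop hf (C.smul_mem ht hV) (horth hR) (hproper _ (horth hR))
    _ = f (Function.update y i R) := by rw [add_sub_cancel]

end Coordinates

section GammaInfty

variable {n : ℕ} {C : ConvexCone ℝ (Fin n → ℝ)}

theorem mem_gammaInfty_iff_eventually {Γ : Set (Fin n → ℝ)} {x : Fin n → ℝ} :
    x ∈ GammaInfty n Γ ↔ ∀ i, ∀ᶠ R in atTop, Function.update x i R ∈ Γ :=
  forall_congr' fun _ => eventually_atTop.symm

theorem gammaInfty_eq_univ_of_forall_ne_neg (horth : {x : Fin n → ℝ | ∀ i, 0 < x i} ⊆ C)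
    (hsymm : ∀ x ∈ C, ∀ σ : Equiv.Perm (Fin n), x ∘ σ ∈ C) {V : Fin n → ℝ} (hV : V ∈ C)
    {i : Fin n} (hneg : ∀ j ≠ i, V j < 0) : GammaInfty n C = Set.univ := by
  refine Set.eq_univ_of_forall fun y => mem_gammaInfty_iff_eventually.2 fun k => ?_
  obtain ⟨W, hW, hWneg⟩ := exists_mem_forall_ne_neg_of_perm_invariant (Γ := C) hsymm hV hneg k
  exact eventually_update_mem horth hW hWneg y

theorem gammaInfty_eq_univ_of_sum_nonpos (hopen : IsOpen (C : Set (Fin n → ℝ)))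
    (horth : {x : Fin n → ℝ | ∀ i, 0 < x i} ⊆ C)
    (hsymm : ∀ x ∈ C, ∀ σ : Equiv.Perm (Fin n), x ∘ σ ∈ C) {x : Fin n → ℝ}
    (hx : x ∈ GammaInfty n C) (hsum : ∑ i, x i ≤ 0) : GammaInfty n C = Set.univ := by
  rcases isEmpty_or_nonempty (Fin n) with _ | _
  · exact Set.eq_univ_of_forall fun _ => isEmptyElim
  obtain ⟨i, -, hi⟩ := exists_sum_erase_nonpos Finset.univ_nonempty hsum
  obtain ⟨R, hR⟩ := (mem_gammaInfty_iff_eventually.1 hx i).exists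
  have hsumR : ∑ j ∈ Finset.univ.erase i, Function.update x i R j ≤ 0 := by
    rwa [Finset.sum_update_of_notMem (Finset.notMem_erase i _)]
  obtain ⟨V, hV, hneg⟩ := exists_mem_forall_ne_neg_of_sum_erase_nonpos hopen hsymm hR hsumR
  exact gammaInfty_eq_univ_of_forall_ne_neg horth hsymm hV hneg

theorem exists_mem_forall_ne_neg_of_gammaInfty_eq_univ {Γ : Set (Fin n → ℝ)}
    (hΓ : GammaInfty n Γ = Set.univ) (i : Fin n) : ∃ V ∈ Γ, ∀ j ≠ i, V j < 0 := by
  have hmem : (-1 : Fin n → ℝ) ∈ GammaInfty n Γ := hΓ ▸ Set.mem_univ _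
  obtain ⟨R, hR⟩ := (mem_gammaInfty_iff_eventually.1 hmem i).exists
  exact ⟨_, hR, fun j hj => by simp [Function.update_of_ne hj]⟩

theorem fInfty_eq_top_of_gammaInfty_eq_univ {f : (Fin n → ℝ) → ℝ}
    (horth : {x : Fin n → ℝ | ∀ i, 0 < x i} ⊆ C) (hf : ConcaveOn ℝ C f)
    (hproper : ∀ x ∈ C, Tendsto (fun R : ℝ => f (R • x)) atTop atTop)
    (hΓ : GammaInfty n C = Set.univ) (x : Fin n → ℝ) : fInfty n f x = ⊤ := by
  refine iInf_eq_top.2 fun i => ?_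
  obtain ⟨V, hV, hneg⟩ := exists_mem_forall_ne_neg_of_gammaInfty_eq_univ hΓ i
  have hlim := tendsto_update_atTop horth hf hproper hV hneg x
  exact (EReal.tendsto_coe_nhds_top_iff.2 hlim).limsup_eq

end GammaInfty

theorem stmt_9_general {n : ℕ} {C : ConvexCone ℝ (Fin n → ℝ)} {f : (Fin n → ℝ) → ℝ}
    (hopen : IsOpen (C : Set (Fin n → ℝ))) (horth : {x : Fin n → ℝ | ∀ i, 0 < x i} ⊆ C)
    (hsymm : ∀ x ∈ C, ∀ σ : Equiv.Perm (Fin n), x ∘ σ ∈ C) (hf : ConcaveOn ℝ C f)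
    (hproper : ∀ x ∈ C, Tendsto (fun R : ℝ => f (R • x)) atTop atTop) :
    (GammaInfty n C = Set.univ ∨ GammaInfty n C ⊆ {x : Fin n → ℝ | 0 < ∑ i, x i}) ∧
    (GammaInfty n C = Set.univ → ∀ x : Fin n → ℝ, fInfty n f x = ⊤) := by
  refine ⟨or_iff_not_imp_left.2 fun hne x hx => ?_,
    fInfty_eq_top_of_gammaInfty_eq_univ horth hf hproper⟩
  by_contra hsum
  exact hne (gammaInfty_eq_univ_of_sum_nonpos hopen horth hsymm hx (not_lt.1 hsum))

/-- The cone `Γ` of Assumption (A), bundled as a `ConvexCone`; closure under addition comes from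
midpoint convexity and scaling. -/
def AssumptionA.toConvexCone {n : ℕ} {Γ : Set (Fin n → ℝ)} {f : (Fin n → ℝ) → ℝ}
    (hA : AssumptionA n Γ f) : ConvexCone ℝ (Fin n → ℝ) where
  carrier := Γ
  smul_mem' t ht x hx := hA.cone x hx t ht
  add_mem' x hx y hy := by
    have hmid := hA.cone _ (hA.convex hx hy (a := 1 / 2) (b := 1 / 2)
      (by norm_num) (by norm_num) (by norm_num)) 2 two_pos
    have hsum : (2 : ℝ) • ((1 / 2 : ℝ) • x + (1 / 2 : ℝ) • y) = x + y := by module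
    rwa [hsum] at hmid

/-- Lemma 2.8 of the paper: (1) either `Γ_∞ = ℝⁿ` or `Γ_∞ ⊆ Γ₁ = {Σᵢ λᵢ > 0}`;
(2) if `Γ_∞ = ℝⁿ` then `f_∞ ≡ +∞`. -/
theorem stmt_9 (n : ℕ) (Γ : Set (Fin n → ℝ)) (f : (Fin n → ℝ) → ℝ)
    (hA : AssumptionA n Γ f) :
    (GammaInfty n Γ = Set.univ ∨
      GammaInfty n Γ ⊆ {x : Fin n → ℝ | 0 < ∑ i, x i}) ∧
    (GammaInfty n Γ = Set.univ → ∀ x : Fin n → ℝ, fInfty n f x = ⊤) :=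
  stmt_9_general (C := hA.toConvexCone) hA.isOpen hA.orthant_subset hA.perm_invariant
    hA.f_concave hA.f_proper
end
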